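/- arXiv:1605.04018 — 2 statements merged into one kernel-verified Lean document; each statement's English description precedes it below -/
import Mathlib

section
/- There exists η > 0 such that μ has a bounded continuous density p with respect to Lebesgue measure, given by p(x) = (1/2π) ∫_{−∞}^{∞} f(t) e^{−ixt} dt, and p extends to a function analytic on the horizontal strip {s ∈ ℂ : |Im s| < η} (namely s ↦ (1/2π) ∫_{−∞}^{∞} f(t) e^{−ist} dt, the integral being absolutely convergent there). -/
/-!
Let `g` be the toll function of the recursion. It is uniformly convex, so for any fixed `y` and `z`
van der Corput's second derivative estimate bounds the integral over `x` of
`exp (i t (y x + z (1 - x) + g x))` by a multiple of `t ^ (-1 / 2)`; averaging over `μ × μ` gives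
`|f t| ≤ C t ^ (-1 / 2)`. Decay `t ^ (-p)` with `p < 1` improves to `t ^ (-2 p)` when inserted in
the fixed-point equation, because the Beta integral `B (1 - p, 1 - p)` converges. Two such steps
reach `t ^ (-3 / 2)`, so `f` is integrable.

Taking absolute values in the fixed-point equation and substituting `s = t x` gives
`t |f t| ≤ (|f| ∗ |f|) t` on `(0, ∞)`. Hence the moments `mₙ = ∫ tⁿ |f t| dt` satisfy
`mₙ₊₁ ≤ ∑ₖ (n choose k) mₖ mₙ₋ₖ`, and by induction `mₙ ≤ n! m₀ⁿ⁺¹`. Summing the exponential series,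
`exp (η |t|) |f t|` is integrable for small `η`, so the Fourier inversion integral, which is the
density of `μ` on the real line, converges and is holomorphic on a strip.
-/

open MeasureTheory Set Filter Topology
open scoped FourierTransform ContDiff ENNReal

/-! ### Van der Corput's second derivative estimate -/

section VanDerCorput

variable {φ φ' φ'' : ℝ → ℝ} {s : Set ℝ} {a b lam : ℝ}

lemma abs_div_add_sq_le (hlam : 0 < lam) (u : ℝ) : |u / (lam + u ^ 2)| ≤ 1 / (2 * √lam) := by
  have hsqrt : √lam ^ 2 = lam := Real.sq_sqrt hlam.le
  rw [abs_div, abs_of_pos (by positivity : 0 < lam + u ^ 2),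
    div_le_div_iff₀ (by positivity) (by positivity)]
  nlinarith [sq_nonneg (√lam - |u|), sq_abs u]

lemma norm_div_add_sq_add_deriv_le (hlam : 0 < lam) (u : ℝ) {w : ℝ} (hw : lam ≤ w) :
    ‖((lam / (lam + u ^ 2) : ℝ) : ℂ) +
      Complex.I * (((lam - u ^ 2) / (lam + u ^ 2) ^ 2 * w : ℝ) : ℂ)‖ ≤
      2 * (w / (lam + u ^ 2)) := by
  have hpos : 0 < lam + u ^ 2 := by positivity
  have hw0 : 0 < w := hlam.trans_le hw
  have habs : |lam - u ^ 2| ≤ lam + u ^ 2 :=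
    abs_le.2 ⟨by linarith, by linarith [sq_nonneg u]⟩
  have h₁ : ‖((lam / (lam + u ^ 2) : ℝ) : ℂ)‖ ≤ w / (lam + u ^ 2) := by
    rw [Complex.norm_real, Real.norm_of_nonneg (by positivity)]
    gcongr
  have h₂ : ‖Complex.I * (((lam - u ^ 2) / (lam + u ^ 2) ^ 2 * w : ℝ) : ℂ)‖ ≤
      w / (lam + u ^ 2) := by
    rw [norm_mul, Complex.norm_I, one_mul, Complex.norm_real, Real.norm_eq_abs, abs_mul, abs_div,
      abs_of_pos hw0, abs_of_pos (pow_pos hpos 2)]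
    calc |lam - u ^ 2| / (lam + u ^ 2) ^ 2 * w
        ≤ (lam + u ^ 2) / (lam + u ^ 2) ^ 2 * w := by gcongr
      _ = w / (lam + u ^ 2) := by field_simp
  linarith [norm_add_le_of_le h₁ h₂]

lemma hasDerivAt_div_add_sq {u : ℝ → ℝ} {w x : ℝ} (hlam : 0 < lam) (hu : HasDerivAt u w x) :
    HasDerivAt (fun y => u y / (lam + u y ^ 2))
      ((lam - u x ^ 2) / (lam + u x ^ 2) ^ 2 * w) x := by
  have hne : lam + u x ^ 2 ≠ 0 := by positivity
  refine (hu.div ((hu.pow 2).const_add lam) hne).congr_deriv ?_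
  simp only [Pi.pow_apply]
  field_simp
  ring

lemma hasDerivAt_arctan_div_sqrt {u : ℝ → ℝ} {w x : ℝ} (hlam : 0 < lam) (hu : HasDerivAt u w x) :
    HasDerivAt (fun y => 2 / √lam * Real.arctan (u y / √lam)) (2 * (w / (lam + u x ^ 2))) x := by
  have hsqrt : √lam ^ 2 = lam := Real.sq_sqrt hlam.le
  have hne : lam + u x ^ 2 ≠ 0 := by positivity
  refine ((hu.div_const _).arctan.const_mul _).congr_deriv ?_
  have hne' : √lam ^ 2 + u x ^ 2 ≠ 0 := by rwa [hsqrt]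
  rw [← hsqrt]
  simp only [Real.sqrt_sq (Real.sqrt_nonneg lam)]
  field_simp

/-- The antiderivative of `e ^ (iφ)` is approximated by `-i φ' / (lam + φ' ^ 2) * e ^ (iφ)`, which,
unlike `-i / φ' * e ^ (iφ)`, stays bounded through the zero of `φ'`. -/
noncomputable def vanDerCorputPrimitive (lam : ℝ) (φ φ' : ℝ → ℝ) (x : ℝ) : ℂ :=
  -Complex.I * ((φ' x / (lam + φ' x ^ 2) : ℝ) : ℂ) * Complex.exp (φ x * Complex.I)

lemma norm_vanDerCorputPrimitive_le (hlam : 0 < lam) (x : ℝ) :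
    ‖vanDerCorputPrimitive lam φ φ' x‖ ≤ 1 / (2 * √lam) := by
  simpa only [vanDerCorputPrimitive, norm_mul, norm_neg, Complex.norm_I,
    Complex.norm_exp_ofReal_mul_I, one_mul, mul_one, Complex.norm_real, Real.norm_eq_abs]
    using abs_div_add_sq_le hlam (φ' x)

lemma hasDerivAt_vanDerCorputPrimitive {w x : ℝ} (hlam : 0 < lam) (hφ : HasDerivAt φ (φ' x) x)
    (hφ' : HasDerivAt φ' w x) :
    HasDerivAt (vanDerCorputPrimitive lam φ φ') (Complex.exp (φ x * Complex.I) -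
      (((lam / (lam + φ' x ^ 2) : ℝ) : ℂ) +
        Complex.I * (((lam - φ' x ^ 2) / (lam + φ' x ^ 2) ^ 2 * w : ℝ) : ℂ)) *
          Complex.exp (φ x * Complex.I)) x := by
  have hne : (lam : ℂ) + (φ' x : ℂ) ^ 2 ≠ 0 := by
    exact_mod_cast (by positivity : lam + φ' x ^ 2 ≠ 0)
  refine (((hasDerivAt_div_add_sq hlam hφ').ofReal_comp.const_mul (-Complex.I)).mul
    (hφ.ofReal_comp.mul_const Complex.I).cexp).congr_deriv ?_
  push_cast
  field_simp
  ring_nf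
  simp only [Complex.I_sq]
  ring

lemma norm_integral_cexp_sub_vanDerCorputPrimitive_le (hs : IsOpen s) (hab : a ≤ b)
    (hsub : Icc a b ⊆ s) (hφ : ∀ x ∈ s, HasDerivAt φ (φ' x) x)
    (hφ' : ∀ x ∈ s, HasDerivAt φ' (φ'' x) x) (hlam : 0 < lam) (hφ'' : ∀ x ∈ s, lam ≤ φ'' x) :
    ‖(∫ x in a..b, Complex.exp (φ x * Complex.I)) - vanDerCorputPrimitive lam φ φ' b‖ ≤
      1 / (2 * √lam) +
        (2 / √lam * Real.arctan (φ' b / √lam) - 2 / √lam * Real.arctan (φ' a / √lam)) := by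
  have he : ContinuousOn (fun x => Complex.exp (φ x * Complex.I)) s := fun x hx =>
    ((hφ x hx).ofReal_comp.mul_const Complex.I).cexp.continuousAt.continuousWithinAt
  have hint := fun x (hx : x ∈ Icc a b) => intervalIntegral.integral_hasDerivAt_right
    ((he.mono (by rw [uIcc_of_le hx.1]; exact (Icc_subset_Icc_right hx.2).trans hsub)
      ).intervalIntegrable)
    (he.stronglyMeasurableAtFilter hs x (hsub hx)) (he.continuousAt (hs.mem_nhds (hsub hx)))
  have hrem := fun x (hx : x ∈ Icc a b) => ((hint x hx).sub
    (hasDerivAt_vanDerCorputPrimitive hlam (hφ x (hsub hx)) (hφ' x (hsub hx)))).congr_deriv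
      (sub_sub_cancel _ _)
  have hbound := fun x (hx : x ∈ Icc a b) => ((hasDerivAt_arctan_div_sqrt hlam
    (hφ' x (hsub hx))).sub_const (2 / √lam * Real.arctan (φ' a / √lam))).const_add (1 / (2 * √lam))
  exact image_norm_le_of_norm_deriv_right_le_deriv_boundary'
    (fun x hx => (hrem x hx).continuousAt.continuousWithinAt)
    (fun x hx => (hrem x (Ico_subset_Icc_self hx)).hasDerivWithinAt)
    (by simpa using norm_vanDerCorputPrimitive_le hlam a)
    (fun x hx => (hbound x hx).continuousAt.continuousWithinAt)
    (fun x hx => (hbound x (Ico_subset_Icc_self hx)).hasDerivWithinAt)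
    (fun x hx => by
      rw [norm_mul, Complex.norm_exp_ofReal_mul_I, mul_one]
      exact norm_div_add_sq_add_deriv_le hlam _ (hφ'' x (hsub (Ico_subset_Icc_self hx))))
    (right_mem_Icc.2 hab)

lemma norm_integral_cexp_le_of_Icc_subset (hs : IsOpen s) (hab : a ≤ b) (hsub : Icc a b ⊆ s)
    (hφ : ∀ x ∈ s, HasDerivAt φ (φ' x) x) (hφ' : ∀ x ∈ s, HasDerivAt φ' (φ'' x) x)
    (hlam : 0 < lam) (hφ'' : ∀ x ∈ s, lam ≤ φ'' x) :
    ‖∫ x in a..b, Complex.exp (φ x * Complex.I)‖ ≤ 8 / √lam := by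
  have harctan : 2 / √lam * Real.arctan (φ' b / √lam) - 2 / √lam * Real.arctan (φ' a / √lam) ≤
      2 / √lam * Real.pi := by
    rw [← mul_sub]
    gcongr
    linarith [Real.arctan_lt_pi_div_two (φ' b / √lam), Real.neg_pi_div_two_lt_arctan (φ' a / √lam)]
  set V := vanDerCorputPrimitive lam φ φ' b
  calc ‖∫ x in a..b, Complex.exp (φ x * Complex.I)‖
      ≤ ‖(∫ x in a..b, Complex.exp (φ x * Complex.I)) - V‖ + ‖V‖ := by
        simpa using norm_add_le ((∫ x in a..b, Complex.exp (φ x * Complex.I)) - V) V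
    _ ≤ (1 / (2 * √lam) + 2 / √lam * Real.pi) + 1 / (2 * √lam) := by
        gcongr
        · exact (norm_integral_cexp_sub_vanDerCorputPrimitive_le hs hab hsub hφ hφ' hlam
            hφ'').trans (by gcongr)
        · exact norm_vanDerCorputPrimitive_le hlam b
    _ = (1 + 2 * Real.pi) / √lam := by field_simp; ring
    _ ≤ 8 / √lam := by gcongr; linarith [Real.pi_lt_d2]

theorem norm_integral_cexp_le_of_le_deriv2 (hab : a ≤ b)
    (hφ : ∀ x ∈ Ioo a b, HasDerivAt φ (φ' x) x) (hφ' : ∀ x ∈ Ioo a b, HasDerivAt φ' (φ'' x) x)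
    (hlam : 0 < lam) (hφ'' : ∀ x ∈ Ioo a b, lam ≤ φ'' x) :
    ‖∫ x in a..b, Complex.exp (φ x * Complex.I)‖ ≤ 8 / √lam := by
  have he : ContinuousOn (fun x => Complex.exp (φ x * Complex.I)) (Ioo a b) := fun x hx =>
    ((hφ x hx).ofReal_comp.mul_const Complex.I).cexp.continuousAt.continuousWithinAt
  have hint : IntegrableOn (fun x => Complex.exp (φ x * Complex.I)) (Ioo a b) :=
    Integrable.of_bound (he.aestronglyMeasurable measurableSet_Ioo) 1
      (Eventually.of_forall fun x => (Complex.norm_exp_ofReal_mul_I _).le)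
  have hcover : AECover (volume.restrict (Ioo a b)) (𝓝[>] (0 : ℝ))
      fun ε => Ioc (a + ε) (b - ε) := by
    refine aecover_Ioo_of_Ioc ?_ ?_ <;>
      exact tendsto_nhdsWithin_of_tendsto_nhds (Continuous.tendsto' (by fun_prop) _ _ (by simp))
  have hlim := (hcover.integral_tendsto_of_countably_generated hint).norm
  rw [intervalIntegral.integral_of_le hab, integral_Ioc_eq_integral_Ioo]
  refine le_of_tendsto hlim ?_
  filter_upwards [self_mem_nhdsWithin] with ε (hε : 0 < ε)
  have hsub : Icc (a + ε) (b - ε) ⊆ Ioo a b := Icc_subset_Ioo (by linarith) (by linarith)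
  rw [Measure.restrict_restrict_of_subset (Ioc_subset_Icc_self.trans hsub)]
  rcases le_total (a + ε) (b - ε) with h | h
  · rw [← intervalIntegral.integral_of_le h]
    exact norm_integral_cexp_le_of_Icc_subset isOpen_Ioo h hsub hφ hφ' hlam hφ''
  · rw [Ioc_eq_empty h.not_gt, setIntegral_empty, norm_zero]
    positivity

end VanDerCorput

/-! ### Decay of the characteristic function of a splitting fixed point -/

lemma intervalIntegrable_rpow_mul_one_sub_rpow {p q : ℝ} (hp : -1 < p) (hq : -1 < q) :
    IntervalIntegrable (fun x : ℝ => x ^ p * (1 - x) ^ q) volume 0 1 := by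
  have hbeta := (Complex.betaIntegral_convergent (u := (p + 1 : ℝ)) (v := (q + 1 : ℝ))
    (by simpa using neg_lt_iff_pos_add.1 hp) (by simpa using neg_lt_iff_pos_add.1 hq)).norm
  refine hbeta.congr_uIoo fun x hx => ?_
  rw [uIoo_of_le zero_le_one] at hx
  have hx1 : 0 < 1 - x := sub_pos.2 hx.2
  have hcast : (1 : ℂ) - x = (1 - x : ℝ) := by push_cast; rfl
  simp only [norm_mul, hcast, Complex.norm_cpow_eq_rpow_re_of_pos hx.1,
    Complex.norm_cpow_eq_rpow_re_of_pos hx1]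
  simp

lemma norm_le_max_mul_rpow_neg {E : Type*} [SeminormedAddGroup E] {f : ℝ → E} {C p q : ℝ}
    (hf1 : ∀ t, ‖f t‖ ≤ 1) (hf : ∀ t, 0 < t → ‖f t‖ ≤ C * t ^ (-q)) (hp : 0 ≤ p) (hpq : p ≤ q)
    {t : ℝ} (ht : 0 < t) : ‖f t‖ ≤ max 1 C * t ^ (-p) := by
  rcases le_total t 1 with h | h
  · calc ‖f t‖ ≤ 1 * 1 := by simpa using hf1 t
      _ ≤ max 1 C * t ^ (-p) := by
        gcongr
        · exact le_max_left 1 C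
        · exact Real.one_le_rpow_of_pos_of_le_one_of_nonpos ht h (by linarith)
  · calc ‖f t‖ ≤ C * t ^ (-q) := hf t ht
      _ ≤ max 1 C * t ^ (-p) := by
        gcongr
        exact le_max_right 1 C

lemma charFun_mul_charFun_mul_cexp {μ : Measure ℝ} [SFinite μ] (t x c : ℝ) :
    charFun μ (t * x) * charFun μ (t * (1 - x)) * Complex.exp ((t * c : ℝ) * Complex.I) =
      ∫ q : ℝ × ℝ, Complex.exp ((t * (q.1 * x + q.2 * (1 - x) + c) : ℝ) * Complex.I)
        ∂(μ.prod μ) := by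
  rw [charFun_apply_real, charFun_apply_real, ← integral_prod_mul, ← integral_mul_const]
  refine integral_congr_ae (Eventually.of_forall fun q => ?_)
  simp only [← Complex.exp_add]
  push_cast
  ring_nf

/-- The distributional fixed-point equation `X = U X + (1 - U) X' + g U` with toll function `g`,
where `X'` is a copy of `X`, `U` is uniform on `[0, 1]` and `U`, `X`, `X'` are independent,
expressed through the characteristic function `f` of `X`. -/
def IsSplittingFixedPoint (g : ℝ → ℝ) (f : ℝ → ℂ) : Prop :=
  ∀ t, f t =
    ∫ x in (0 : ℝ)..1, f (t * x) * f (t * (1 - x)) * Complex.exp ((t * g x : ℝ) * Complex.I)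

namespace IsSplittingFixedPoint

variable {g g' g'' : ℝ → ℝ} {f : ℝ → ℂ} {μ : Measure ℝ} [IsProbabilityMeasure μ]
  {C p t lam : ℝ}

lemma enorm_le_lintegral (hfix : IsSplittingFixedPoint g f) (t : ℝ) :
    ‖f t‖ₑ ≤ ∫⁻ x in Ioo (0 : ℝ) 1, ‖f (t * x)‖ₑ * ‖f (t * (1 - x))‖ₑ := by
  rw [hfix t, intervalIntegral.integral_of_le zero_le_one, integral_Ioc_eq_integral_Ioo]
  refine (enorm_integral_le_lintegral_enorm _).trans_eq (lintegral_congr fun x => ?_)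
  rw [enorm_mul, enorm_mul, ← ofReal_norm (Complex.exp _), Complex.norm_exp_ofReal_mul_I,
    ENNReal.ofReal_one, mul_one]

lemma norm_charFun_le_div_sqrt (hfix : IsSplittingFixedPoint g (charFun μ))
    (hg : ∀ x ∈ Ioo (0 : ℝ) 1, HasDerivAt g (g' x) x)
    (hg' : ∀ x ∈ Ioo (0 : ℝ) 1, HasDerivAt g' (g'' x) x)
    (hlam : 0 < lam) (hg'' : ∀ x ∈ Ioo (0 : ℝ) 1, lam ≤ g'' x) (ht : 0 < t) :
    ‖charFun μ t‖ ≤ 8 / √(t * lam) := by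
  set H : ℝ → ℝ × ℝ → ℂ := fun x q =>
    Complex.exp ((t * (q.1 * x + q.2 * (1 - x) + g x) : ℝ) * Complex.I)
  have hgm : AEMeasurable g (volume.restrict (uIoc (0 : ℝ) 1)) := by
    rw [uIoc_of_le zero_le_one, ← restrict_Ioo_eq_restrict_Ioc]
    exact ContinuousOn.aemeasurable (fun x hx => (hg x hx).continuousAt.continuousWithinAt)
      measurableSet_Ioo
  have hH : AEStronglyMeasurable (Function.uncurry H)
      ((volume.restrict (uIoc (0 : ℝ) 1)).prod (μ.prod μ)) := by
    have := hgm.comp_fst (ν := μ.prod μ)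
    exact AEMeasurable.aestronglyMeasurable (by unfold Function.uncurry; fun_prop)
  have hosc : ∀ q, ‖∫ x in (0 : ℝ)..1, H x q‖ ≤ 8 / √(t * lam) := fun q =>
    norm_integral_cexp_le_of_le_deriv2 zero_le_one
      (fun x hx => ((((hasDerivAt_id x).const_mul q.1).add
        (((hasDerivAt_id x).const_sub 1).const_mul q.2)).add (hg x hx)).const_mul t)
      (fun x hx => ((hg' x hx).const_add _).const_mul t) (mul_pos ht hlam)
      (fun x hx => mul_le_mul_of_nonneg_left (hg'' x hx) ht.le)
  have : IsFiniteMeasure (volume.restrict (uIoc (0 : ℝ) 1)) :=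
    inferInstanceAs (IsFiniteMeasure (volume.restrict (Ioc _ _)))
  rw [hfix t]
  simp only [charFun_mul_charFun_mul_cexp]
  rw [intervalIntegral_integral_swap (Integrable.of_bound hH 1
    (Eventually.of_forall fun r => (Complex.norm_exp_ofReal_mul_I _).le))]
  simpa using norm_integral_le_of_norm_le_const (μ := μ.prod μ) (Eventually.of_forall hosc)

lemma norm_charFun_le_mul_rpow_neg_half (hfix : IsSplittingFixedPoint g (charFun μ))
    (hg : ∀ x ∈ Ioo (0 : ℝ) 1, HasDerivAt g (g' x) x)
    (hg' : ∀ x ∈ Ioo (0 : ℝ) 1, HasDerivAt g' (g'' x) x)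
    (hlam : 0 < lam) (hg'' : ∀ x ∈ Ioo (0 : ℝ) 1, lam ≤ g'' x) (ht : 0 < t) :
    ‖charFun μ t‖ ≤ 8 / √lam * t ^ (-(1 / 2) : ℝ) := by
  refine (hfix.norm_charFun_le_div_sqrt hg hg' hlam hg'' ht).trans_eq ?_
  rw [mul_comm t, Real.sqrt_mul hlam.le, Real.rpow_neg ht.le, ← Real.sqrt_eq_rpow,
    div_mul_eq_div_div, div_eq_mul_inv (8 / √lam)]

lemma norm_le_mul_rpow_neg_two_mul (hfix : IsSplittingFixedPoint g f) (hp : p < 1)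
    (hf : ∀ t, 0 < t → ‖f t‖ ≤ C * t ^ (-p)) (ht : 0 < t) :
    ‖f t‖ ≤ (C ^ 2 * ∫ x in (0 : ℝ)..1, x ^ (-p) * (1 - x) ^ (-p)) * t ^ (-(2 * p)) := by
  have hint := (intervalIntegrable_rpow_mul_one_sub_rpow (neg_lt_neg hp)
    (neg_lt_neg hp)).const_mul (C ^ 2 * t ^ (-(2 * p)))
  have hle : ∀ᵐ x : ℝ, x ∈ Ioc (0 : ℝ) 1 →
      ‖f (t * x) * f (t * (1 - x)) * Complex.exp ((t * g x : ℝ) * Complex.I)‖ ≤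
        C ^ 2 * t ^ (-(2 * p)) * (x ^ (-p) * (1 - x) ^ (-p)) := by
    filter_upwards [Measure.ae_ne volume 1] with x hx1 hx
    have hx0 : 0 < x := hx.1
    have hx1 : 0 < 1 - x := sub_pos.2 (hx.2.lt_of_ne hx1)
    rw [norm_mul, norm_mul, Complex.norm_exp_ofReal_mul_I, mul_one]
    calc ‖f (t * x)‖ * ‖f (t * (1 - x))‖
        ≤ (C * (t * x) ^ (-p)) * (C * (t * (1 - x)) ^ (-p)) :=
          mul_le_mul (hf _ (by positivity)) (hf _ (by positivity)) (norm_nonneg _)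
            ((norm_nonneg _).trans (hf _ (by positivity)))
      _ = C ^ 2 * t ^ (-(2 * p)) * (x ^ (-p) * (1 - x) ^ (-p)) := by
          rw [Real.mul_rpow ht.le hx0.le, Real.mul_rpow ht.le hx1.le,
            show -(2 * p) = -p + -p by ring, Real.rpow_add ht]
          ring
  rw [hfix t]
  refine (intervalIntegral.norm_integral_le_of_norm_le zero_le_one hle hint).trans_eq ?_
  rw [intervalIntegral.integral_const_mul]
  ring

lemma exists_norm_charFun_le_mul_rpow (hfix : IsSplittingFixedPoint g (charFun μ))
    (hf : ∀ t, 0 < t → ‖charFun μ t‖ ≤ C * t ^ (-(1 / 2) : ℝ)) :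
    ∃ C', ∀ t, 0 < t → ‖charFun μ t‖ ≤ C' * t ^ (-(3 / 2) : ℝ) := by
  have h₁ := fun t (ht : 0 < t) => hfix.norm_le_mul_rpow_neg_two_mul (by norm_num) hf ht
  have h₂ := fun t (ht : 0 < t) => norm_le_max_mul_rpow_neg (p := 3 / 4) norm_charFun_le_one h₁
    (by norm_num) (by norm_num) ht
  rw [show (-(3 / 2) : ℝ) = -(2 * (3 / 4)) by norm_num]
  exact ⟨_, fun t ht => hfix.norm_le_mul_rpow_neg_two_mul (by norm_num) h₂ ht⟩

lemma integrable_charFun (hfix : IsSplittingFixedPoint g (charFun μ))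
    (hf : ∀ t, 0 < t → ‖charFun μ t‖ ≤ C * t ^ (-(1 / 2) : ℝ)) : Integrable (charFun μ) := by
  obtain ⟨C', hC'⟩ := hfix.exists_norm_charFun_le_mul_rpow hf
  refine continuous_charFun.locallyIntegrable.integrable_of_isBigO_atTop_of_norm_isNegInvariant
    (g := fun t => t ^ (-(3 / 2) : ℝ)) ?_ ?_ ?_
  · exact Eventually.of_forall fun t => by simp [charFun_neg]
  · refine Asymptotics.IsBigO.of_bound C' ?_
    filter_upwards [eventually_gt_atTop 0] with t ht
    rw [Real.norm_of_nonneg (by positivity)]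
    exact hC' t ht
  · exact integrableAtFilter_rpow_atTop_iff.2 (by norm_num)

end IsSplittingFixedPoint

/-! ### Exponential moments -/

section Moments

open scoped Nat

lemma le_factorial_mul_pow_of_succ_le_sum_choose {R : Type*} [CommSemiring R] [PartialOrder R]
    [IsOrderedRing R] {m : ℕ → R} (hm : ∀ n, 0 ≤ m n)
    (hsucc : ∀ n, m (n + 1) ≤ ∑ k ∈ Finset.range (n + 1), m k * m (n - k) * n.choose k) (n : ℕ) :
    m n ≤ n ! * m 0 ^ (n + 1) := by
  induction n using Nat.strong_induction_on with
  | _ n ih =>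
    rcases n with _ | n
    · simp
    have hterm : ∀ k ∈ Finset.range (n + 1),
        m k * m (n - k) * n.choose k ≤ n ! * m 0 ^ (n + 2) := fun k hk => by
      have hkn : k ≤ n := Nat.lt_succ_iff.1 (Finset.mem_range.1 hk)
      have hm0 := hm 0
      calc m k * m (n - k) * n.choose k
          ≤ (k ! * m 0 ^ (k + 1)) * ((n - k)! * m 0 ^ (n - k + 1)) * n.choose k :=
            mul_le_mul_of_nonneg_right
              (mul_le_mul (ih k (by lia)) (ih (n - k) (by lia)) (hm _) (by positivity))
              (Nat.cast_nonneg _)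
        _ = (n.choose k * k ! * (n - k)! : ℕ) * m 0 ^ (k + 1 + (n - k + 1)) := by
            push_cast
            ring
        _ = n ! * m 0 ^ (n + 2) := by
            rw [Nat.choose_mul_factorial_mul_factorial hkn]
            congr 2
            lia
    calc m (n + 1) ≤ ∑ k ∈ Finset.range (n + 1), m k * m (n - k) * n.choose k := hsucc n
      _ ≤ ∑ _k ∈ Finset.range (n + 1), (n ! : R) * m 0 ^ (n + 2) := Finset.sum_le_sum hterm
      _ = (n + 1)! * m 0 ^ (n + 1 + 1) := by
        rw [Finset.sum_const, Finset.card_range, nsmul_eq_mul, Nat.factorial_succ]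
        push_cast
        ring

lemma lintegral_exp_eq_tsum {ν : Measure ℝ} (hν : ∀ᵐ t ∂ν, 0 ≤ t) {η : ℝ} (hη : 0 ≤ η) :
    ∫⁻ t, ENNReal.ofReal (Real.exp (η * t)) ∂ν =
      ∑' n : ℕ, ENNReal.ofReal η ^ n * (n ! : ℝ≥0∞)⁻¹ * ∫⁻ t, ENNReal.ofReal t ^ n ∂ν := by
  calc ∫⁻ t, ENNReal.ofReal (Real.exp (η * t)) ∂ν
      = ∫⁻ t, ∑' n : ℕ, ENNReal.ofReal η ^ n * (n ! : ℝ≥0∞)⁻¹ * ENNReal.ofReal t ^ n ∂ν := by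
        refine lintegral_congr_ae ?_
        filter_upwards [hν] with t ht
        rw [Real.exp_eq_exp_ℝ, NormedSpace.exp_eq_tsum_div, ENNReal.ofReal_tsum_of_nonneg
          (fun n => by positivity) (Real.summable_pow_div_factorial _)]
        refine tsum_congr fun n => ?_
        rw [ENNReal.ofReal_div_of_pos (by positivity), ENNReal.ofReal_pow (by positivity),
          ENNReal.ofReal_mul hη, ENNReal.ofReal_natCast, mul_pow, div_eq_mul_inv]
        ring
    _ = _ := by
        rw [lintegral_tsum fun n => by fun_prop]
        refine tsum_congr fun n => lintegral_const_mul _ (by fun_prop)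

variable {ν : Measure ℝ} [SFinite ν]

lemma lintegral_pow_conv_self (hν : ∀ᵐ t ∂ν, 0 ≤ t) (n : ℕ) :
    ∫⁻ t, ENNReal.ofReal t ^ n ∂(ν ∗ ν) = ∑ k ∈ Finset.range (n + 1),
      (∫⁻ t, ENNReal.ofReal t ^ k ∂ν) * (∫⁻ t, ENNReal.ofReal t ^ (n - k) ∂ν) * n.choose k := by
  rw [Measure.lintegral_conv (by fun_prop)]
  calc ∫⁻ s, ∫⁻ t, ENNReal.ofReal (s + t) ^ n ∂ν ∂ν
      = ∫⁻ s, ∫⁻ t, ∑ k ∈ Finset.range (n + 1),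
          ENNReal.ofReal s ^ k * ENNReal.ofReal t ^ (n - k) * n.choose k ∂ν ∂ν := by
        refine lintegral_congr_ae ?_
        filter_upwards [hν] with s hs
        refine lintegral_congr_ae ?_
        filter_upwards [hν] with t ht
        rw [ENNReal.ofReal_add hs ht, add_pow]
    _ = ∫⁻ s, ∑ k ∈ Finset.range (n + 1), ENNReal.ofReal s ^ k *
          (∫⁻ t, ENNReal.ofReal t ^ (n - k) ∂ν) * n.choose k ∂ν := by
        refine lintegral_congr fun s => ?_
        rw [lintegral_finsetSum _ fun k _ => by fun_prop]
        refine Finset.sum_congr rfl fun k _ => ?_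
        rw [lintegral_mul_const _ (by fun_prop), lintegral_const_mul _ (by fun_prop)]
    _ = _ := by
        rw [lintegral_finsetSum _ fun k _ => by fun_prop]
        refine Finset.sum_congr rfl fun k _ => ?_
        rw [lintegral_mul_const _ (by fun_prop), lintegral_mul_const _ (by fun_prop)]

lemma lintegral_pow_le_of_withDensity_le_conv (hν : ∀ᵐ t ∂ν, 0 ≤ t)
    (hconv : ν.withDensity ENNReal.ofReal ≤ ν ∗ ν) (n : ℕ) :
    ∫⁻ t, ENNReal.ofReal t ^ n ∂ν ≤ n ! * ν univ ^ (n + 1) := by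
  have hsucc (n : ℕ) : ∫⁻ t, ENNReal.ofReal t ^ (n + 1) ∂ν ≤ ∑ k ∈ Finset.range (n + 1),
      (∫⁻ t, ENNReal.ofReal t ^ k ∂ν) * (∫⁻ t, ENNReal.ofReal t ^ (n - k) ∂ν) * n.choose k :=
    calc ∫⁻ t, ENNReal.ofReal t ^ (n + 1) ∂ν
        = ∫⁻ t, ENNReal.ofReal t ^ n ∂(ν.withDensity ENNReal.ofReal) := by
          rw [lintegral_withDensity_eq_lintegral_mul _ (by fun_prop) (by fun_prop)]
          simp only [Pi.mul_apply, pow_succ']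
      _ ≤ ∫⁻ t, ENNReal.ofReal t ^ n ∂(ν ∗ ν) := lintegral_mono' hconv le_rfl
      _ = _ := lintegral_pow_conv_self hν n
  simpa using le_factorial_mul_pow_of_succ_le_sum_choose
    (m := fun n => ∫⁻ t, ENNReal.ofReal t ^ n ∂ν) (fun _ => zero_le) hsucc n

lemma lintegral_exp_le_of_withDensity_le_conv (hν : ∀ᵐ t ∂ν, 0 ≤ t)
    (hconv : ν.withDensity ENNReal.ofReal ≤ ν ∗ ν) {η : ℝ} (hη : 0 ≤ η) :
    ∫⁻ t, ENNReal.ofReal (Real.exp (η * t)) ∂ν ≤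
      ν univ * (1 - ENNReal.ofReal η * ν univ)⁻¹ := by
  rw [lintegral_exp_eq_tsum hν hη, ← ENNReal.tsum_geometric, ← ENNReal.tsum_mul_left]
  refine ENNReal.tsum_le_tsum fun n => ?_
  calc ENNReal.ofReal η ^ n * (n ! : ℝ≥0∞)⁻¹ * ∫⁻ t, ENNReal.ofReal t ^ n ∂ν
      ≤ ENNReal.ofReal η ^ n * (n ! : ℝ≥0∞)⁻¹ * (n ! * ν univ ^ (n + 1)) := by
        gcongr
        exact lintegral_pow_le_of_withDensity_le_conv hν hconv n
    _ = (n ! : ℝ≥0∞)⁻¹ * n ! * (ν univ * (ENNReal.ofReal η * ν univ) ^ n) := by ring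
    _ = ν univ * (ENNReal.ofReal η * ν univ) ^ n := by
        rw [ENNReal.inv_mul_cancel (by exact_mod_cast n.factorial_ne_zero)
          (ENNReal.natCast_ne_top _), one_mul]

end Moments

lemma exists_pos_lintegral_exp_lt_top {ν : Measure ℝ} [IsFiniteMeasure ν] (hν : ∀ᵐ t ∂ν, 0 ≤ t)
    (hconv : ν.withDensity ENNReal.ofReal ≤ ν ∗ ν) :
    ∃ η > 0, ∫⁻ t, ENNReal.ofReal (Real.exp (η * t)) ∂ν < ⊤ := by
  set M := ν.real univ
  have : 0 ≤ M := measureReal_nonneg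
  refine ⟨1 / (M + 1), by positivity,
    (lintegral_exp_le_of_withDensity_le_conv hν hconv (by positivity)).trans_lt ?_⟩
  rw [← ofReal_measureReal, ← ENNReal.ofReal_mul (by positivity)]
  refine ENNReal.mul_lt_top ENNReal.ofReal_lt_top (ENNReal.inv_lt_top.2 (tsub_pos_of_lt ?_))
  rw [ENNReal.ofReal_lt_one, one_div_mul_eq_div, div_lt_one (by positivity)]
  exact lt_add_one M

lemma ofReal_mul_indicator_le_lconvolution_self {a : ℝ → ℝ≥0∞} (ha : Measurable a)
    (hle : ∀ t, a t ≤ ∫⁻ x in Ioo (0 : ℝ) 1, a (t * x) * a (t * (1 - x))) (t : ℝ) :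
    ENNReal.ofReal t * (Ioi 0).indicator a t ≤
      ((Ioi 0).indicator a ⋆ₗ[volume] (Ioi 0).indicator a) t := by
  rcases le_or_gt t 0 with ht | ht
  · simp [ENNReal.ofReal_of_nonpos ht]
  set b := (Ioi (0 : ℝ)).indicator a
  have hb : Measurable b := ha.indicator measurableSet_Ioi
  have hba : ∀ s, 0 < s → b s = a s := fun s hs => indicator_of_mem hs a
  calc ENNReal.ofReal t * b t
      ≤ ENNReal.ofReal t * ∫⁻ x in Ioo (0 : ℝ) 1, b (t * x) * b (-(t * x) + t) := by
        rw [hba t ht]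
        gcongr
        refine (hle t).trans_eq (setLIntegral_congr_fun measurableSet_Ioo fun x hx => ?_)
        rw [hba _ (mul_pos ht hx.1), hba _ (by nlinarith [hx.2])]
        ring_nf
    _ ≤ ENNReal.ofReal t * ∫⁻ x, b (t * x) * b (-(t * x) + t) := by
        gcongr
        exact Measure.restrict_le_self
    _ = ∫⁻ s, b s * b (-s + t) := by
        conv_rhs => rw [← Real.smul_map_volume_mul_left ht.ne', lintegral_smul_measure,
          abs_of_pos ht, lintegral_map (by fun_prop) (by fun_prop), smul_eq_mul]

lemma withDensity_ofReal_le_conv_self {a : ℝ → ℝ≥0∞} (ha : Measurable a)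
    (hle : ∀ t, a t ≤ ∫⁻ x in Ioo (0 : ℝ) 1, a (t * x) * a (t * (1 - x))) :
    ((volume.restrict (Ioi 0)).withDensity a).withDensity ENNReal.ofReal ≤
      (volume.restrict (Ioi 0)).withDensity a ∗ (volume.restrict (Ioi 0)).withDensity a := by
  have hb : Measurable ((Ioi (0 : ℝ)).indicator a) := ha.indicator measurableSet_Ioi
  rw [← withDensity_indicator measurableSet_Ioi,
    conv_withDensity_eq_lconvolution hb hb, ← withDensity_mul _ hb ENNReal.measurable_ofReal]
  refine withDensity_mono (Eventually.of_forall fun t => ?_)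
  rw [Pi.mul_apply, mul_comm]
  exact ofReal_mul_indicator_le_lconvolution_self ha hle t

lemma exists_pos_lintegral_exp_mul_lt_top {a : ℝ → ℝ≥0∞} (ha : Measurable a)
    (hle : ∀ t, a t ≤ ∫⁻ x in Ioo (0 : ℝ) 1, a (t * x) * a (t * (1 - x)))
    (hfin : ∫⁻ t in Ioi 0, a t ≠ ⊤) :
    ∃ η > 0, ∫⁻ t in Ioi 0, ENNReal.ofReal (Real.exp (η * t)) * a t < ⊤ := by
  have := isFiniteMeasure_withDensity hfin
  obtain ⟨η, hη, hexp⟩ := exists_pos_lintegral_exp_lt_top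
    ((withDensity_absolutelyContinuous _ a).ae_le
      ((ae_restrict_mem measurableSet_Ioi).mono fun _ => le_of_lt))
    (withDensity_ofReal_le_conv_self ha hle)
  rw [lintegral_withDensity_eq_lintegral_mul _ ha (by fun_prop)] at hexp
  exact ⟨η, hη, by simpa only [Pi.mul_apply, mul_comm] using hexp⟩

lemma integrable_of_integrableOn_Ioi_of_norm_even {E : Type*} [NormedAddCommGroup E] {f : ℝ → E}
    (hf : AEStronglyMeasurable f) (hint : IntegrableOn f (Ioi 0)) (heven : ∀ t, ‖f (-t)‖ = ‖f t‖) :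
    Integrable f := by
  have hneg : IntegrableOn (fun t => ‖f (-t)‖) (Iio 0) :=
    IntegrableOn.comp_neg_Iio (f := fun t => ‖f t‖) (by rw [neg_zero]; exact hint.norm)
  simp only [heven] at hneg
  rw [← integrableOn_univ, ← Iic_union_Ioi (a := (0 : ℝ)), integrableOn_union,
    integrableOn_Iic_iff_integrableOn_Iio]
  exact ⟨(integrable_norm_iff hf.restrict).1 hneg, hint⟩

lemma IsSplittingFixedPoint.exists_pos_integrable_exp_mul_abs {g : ℝ → ℝ} {μ : Measure ℝ}
    [IsFiniteMeasure μ] (hfix : IsSplittingFixedPoint g (charFun μ))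
    (hint : Integrable (charFun μ)) :
    ∃ η > 0, Integrable fun t => Real.exp (η * |t|) * ‖charFun μ t‖ := by
  obtain ⟨η, hη, hexp⟩ := exists_pos_lintegral_exp_mul_lt_top
    (continuous_charFun (μ := μ)).measurable.enorm hfix.enorm_le_lintegral
    hint.integrableOn.2.ne
  have hcont : Continuous fun t => Real.exp (η * |t|) * ‖charFun μ t‖ := by
    have := continuous_charFun (μ := μ)
    fun_prop
  refine ⟨η, hη, integrable_of_integrableOn_Ioi_of_norm_even hcont.aestronglyMeasurable
    ⟨hcont.aestronglyMeasurable.restrict, ?_⟩ fun t => by simp [charFun_neg]⟩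
  refine (setLIntegral_mono' measurableSet_Ioi fun t ht => le_of_eq ?_).trans_lt hexp
  rw [enorm_mul, enorm_norm, abs_of_pos ht, Real.enorm_of_nonneg (Real.exp_pos _).le]

/-! ### Fourier inversion -/

lemma locallyIntegrable_rnDeriv_smul {X E : Type*} [TopologicalSpace X] [MeasurableSpace X]
    [OpensMeasurableSpace X] [NormedAddCommGroup E] [NormedSpace ℝ E] {μ ν : Measure X}
    [SigmaFinite μ] [μ.HaveLebesgueDecomposition ν] (hμν : μ ≪ ν) {p : X → E}
    (hp : LocallyIntegrable p μ) :
    LocallyIntegrable (fun x => (μ.rnDeriv ν x).toReal • p x) ν := fun x => by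
  obtain ⟨s, hs, hps⟩ := hp x
  obtain ⟨U, hUs, hU, hxU⟩ := mem_nhds_iff.1 hs
  refine ⟨U, hU.mem_nhds hxU, ?_⟩
  rw [← integrable_indicator_iff hU.measurableSet, indicator_smul,
    integrable_rnDeriv_smul_iff hμν, integrable_indicator_iff hU.measurableSet]
  exact hps.mono_set hUs

section Inversion

variable {E : Type*} [NormedAddCommGroup E] [MeasurableSpace E] [BorelSpace E]

lemma eq_withDensity_of_integral_contDiff_mul_eq [NormedSpace ℝ E] [FiniteDimensional ℝ E]
    {μ ν : Measure E} [IsLocallyFiniteMeasure μ]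
    [IsLocallyFiniteMeasure ν] {p : E → ℝ} (hpm : Measurable p) (hp : LocallyIntegrable p ν)
    (h : ∀ φ : E → ℝ, ContDiff ℝ ∞ φ → HasCompactSupport φ →
      ∫ x, φ x ∂μ = ∫ x, φ x * p x ∂ν) :
    μ = ν.withDensity fun x => ENNReal.ofReal (p x) := by
  set ρ := μ + ν
  have hμρ : μ ≪ ρ := Measure.AbsolutelyContinuous.rfl.add_right ν
  have hνρ : ν ≪ ρ := Measure.AbsolutelyContinuous.rfl.add_right' μ
  have hae : ∀ᵐ x ∂ρ, (μ.rnDeriv ρ x).toReal • (1 : ℝ) = (ν.rnDeriv ρ x).toReal • p x := by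
    refine ae_eq_of_integral_contDiff_smul_eq
      (locallyIntegrable_rnDeriv_smul hμρ (locallyIntegrable_const 1))
      (locallyIntegrable_rnDeriv_smul hνρ hp) fun φ hφ hφc => ?_
    simp only [smul_comm (φ _)]
    rw [integral_rnDeriv_smul hμρ, integral_rnDeriv_smul hνρ]
    simpa using h φ hφ hφc
  calc μ = ρ.withDensity (μ.rnDeriv ρ) := (Measure.withDensity_rnDeriv_eq μ ρ hμρ).symm
    _ = ρ.withDensity (ν.rnDeriv ρ * fun x => ENNReal.ofReal (p x)) := by
      refine withDensity_congr_ae ?_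
      filter_upwards [hae, μ.rnDeriv_lt_top ρ, ν.rnDeriv_lt_top ρ] with x hx hμx hνx
      rw [Pi.mul_apply, ← ENNReal.ofReal_toReal hμx.ne, ← ENNReal.ofReal_toReal hνx.ne,
        ← ENNReal.ofReal_mul ENNReal.toReal_nonneg, ← smul_eq_mul, ← hx, smul_eq_mul, mul_one]
    _ = (ρ.withDensity (ν.rnDeriv ρ)).withDensity fun x => ENNReal.ofReal (p x) :=
      withDensity_mul _ (Measure.measurable_rnDeriv ν ρ) hpm.ennreal_ofReal
    _ = ν.withDensity fun x => ENNReal.ofReal (p x) := by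
      rw [Measure.withDensity_rnDeriv_eq ν ρ hνρ]

variable [InnerProductSpace ℝ E] [FiniteDimensional ℝ E] {μ : Measure E}

lemma integral_fourierIntegral_innerₗ_mul_eq [SigmaFinite μ] {f g : E → ℂ} (hf : Integrable f μ)
    (hg : Integrable g) :
    ∫ w, VectorFourier.fourierIntegral 𝐞 μ (innerₗ E) f w * g w = ∫ x, f x * 𝓕 g x ∂μ := by
  have hflip := VectorFourier.integral_fourierIntegral_smul_eq_flip (L := innerₗ E)
    Real.continuous_fourierChar continuous_inner hf hg
  rwa [flip_innerₗ] at hflip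

variable [IsFiniteMeasure μ]

lemma integral_schwartzMap_eq_integral_mul_fourier_charFun (hint : Integrable (charFun μ))
    (φ : SchwartzMap E ℂ) :
    ∫ x, φ x ∂μ = ∫ x, φ x * 𝓕 (fun w => charFun μ ((2 * Real.pi) • w)) x := by
  set F : E → ℂ := fun w => charFun μ ((2 * Real.pi) • w)
  have hF : Integrable F := hint.comp_smul (by simp [Real.pi_ne_zero])
  have hμF (w : E) : VectorFourier.fourierIntegral 𝐞 μ (innerₗ E) 1 w = F (-w) := by
    simp only [F]
    rw [charFun_eq_fourierIntegral', smul_neg, smul_neg, neg_smul, neg_neg, smul_smul,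
      inv_mul_cancel₀ Real.two_pi_pos.ne', one_smul]
  set ψ : SchwartzMap E ℂ := 𝓕⁻ φ
  have hψ (w : E) : ψ w = 𝓕 (φ : E → ℂ) (-w) := by
    rw [← Real.fourierInv_eq_fourier_neg, ← SchwartzMap.fourierInv_coe]
  have hφ : 𝓕 (ψ : E → ℂ) = φ := by
    rw [← SchwartzMap.fourier_coe, FourierTransform.fourier_fourierInv_eq]
  calc ∫ x, φ x ∂μ = ∫ x, (1 : E → ℂ) x * 𝓕 (ψ : E → ℂ) x ∂μ := by
        simp only [hφ, Pi.one_apply, one_mul]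
    _ = ∫ w, F (-w) * 𝓕 (φ : E → ℂ) (-w) := by
        simp only [← hμF, ← hψ]
        exact (integral_fourierIntegral_innerₗ_mul_eq (integrable_const 1) ψ.integrable).symm
    _ = ∫ w, 𝓕 (φ : E → ℂ) w * F w := by
        rw [integral_neg_eq_self fun w => F w * 𝓕 (φ : E → ℂ) w]
        simp only [mul_comm]
    _ = ∫ x, φ x * 𝓕 F x := integral_fourierIntegral_innerₗ_mul_eq φ.integrable hF

theorem eq_withDensity_fourier_charFun (hint : Integrable (charFun μ)) :
    μ = volume.withDensity fun x =>
      ENNReal.ofReal (𝓕 (fun w => charFun μ ((2 * Real.pi) • w)) x).re := by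
  set q := 𝓕 fun w => charFun μ ((2 * Real.pi) • w)
  have hq : Continuous q := VectorFourier.fourierIntegral_continuous Real.continuous_fourierChar
    continuous_inner (hint.comp_smul (by simp [Real.pi_ne_zero]))
  refine eq_withDensity_of_integral_contDiff_mul_eq (by fun_prop)
    (Complex.continuous_re.comp hq).locallyIntegrable fun φ hφ hφc => ?_
  have hsmooth : ContDiff ℝ ∞ fun x => (φ x : ℂ) := Complex.ofRealCLM.contDiff.comp hφ
  have hsupp : HasCompactSupport fun x => (φ x : ℂ) :=
    hφc.comp_left (g := Complex.ofReal) Complex.ofReal_zero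
  have hφq : Integrable fun x => (φ x : ℂ) * q x :=
    (hsmooth.continuous.mul hq).integrable_of_hasCompactSupport hsupp.mul_right
  calc ∫ x, φ x ∂μ = (∫ x, (φ x : ℂ) ∂μ).re := by
        rw [integral_complex_ofReal, Complex.ofReal_re]
    _ = (∫ x, (φ x : ℂ) * q x).re :=
        congrArg Complex.re (integral_schwartzMap_eq_integral_mul_fourier_charFun hint
          (hsupp.toSchwartzMap hsmooth))
    _ = ∫ x, φ x * (q x).re := by
        simpa using (integral_re hφq).symm

end Inversion

/-- The Fourier inversion integral of `f` at a complex frequency `z`. On the real line it is the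
candidate density of a measure with characteristic function `f`. -/
noncomputable def fourierInversion (f : ℝ → ℂ) (z : ℂ) : ℂ :=
  1 / (2 * Real.pi) * ∫ t : ℝ, f t * Complex.exp (-(Complex.I * z * t))

section Strip

variable {f : ℝ → ℂ} {η : ℝ} {z : ℂ}

lemma fourierInversion_ofReal (f : ℝ → ℂ) (x : ℝ) :
    fourierInversion f x = 𝓕 (fun w => f ((2 * Real.pi) • w)) x := by
  have hcomp := Measure.integral_comp_mul_left
    (fun t : ℝ => f t * Complex.exp (-(Complex.I * x * t))) (2 * Real.pi)
  rw [abs_inv, abs_of_pos Real.two_pi_pos, Complex.real_smul] at hcomp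
  rw [fourierInversion, Real.fourier_real_eq_integral_exp_smul, one_div]
  push_cast at hcomp
  rw [← hcomp]
  congr 1 with w
  rw [smul_eq_mul, smul_eq_mul, mul_comm]
  push_cast
  ring_nf

lemma continuous_fourierInversion_ofReal (hf : Integrable f) :
    Continuous fun x : ℝ => fourierInversion f x := by
  simp only [fourierInversion_ofReal]
  exact VectorFourier.fourierIntegral_continuous Real.continuous_fourierChar continuous_inner
    (hf.comp_smul (by simp [Real.pi_ne_zero]))

lemma norm_fourierInversion_ofReal_le (f : ℝ → ℂ) (x : ℝ) :
    ‖fourierInversion f x‖ ≤ ∫ t, ‖f ((2 * Real.pi) • t)‖ := by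
  rw [fourierInversion_ofReal]
  exact VectorFourier.norm_fourierIntegral_le_integral_norm ..

lemma ofReal_re_fourierInversion (hf : ∀ t, f (-t) = starRingEnd ℂ (f t)) (x : ℝ) :
    ((fourierInversion f x).re : ℂ) = fourierInversion f x := by
  refine Complex.conj_eq_iff_re.1 ?_
  simp only [fourierInversion, map_mul, map_div₀, map_one, map_ofNat, Complex.conj_ofReal]
  rw [← integral_conj, ← integral_neg_eq_self]
  simp [hf, ← Complex.exp_conj]

lemma norm_cexp_neg_I_mul_le (z : ℂ) (t : ℝ) :
    ‖Complex.exp (-(Complex.I * z * t))‖ ≤ Real.exp (|z.im| * |t|) := by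
  rw [Complex.norm_exp, ← abs_mul]
  simpa using le_abs_self (z.im * t)

lemma integrable_mul_cexp_of_abs_im_le (hf : AEStronglyMeasurable f)
    (hexp : Integrable fun t => Real.exp (η * |t|) * ‖f t‖) (hz : |z.im| ≤ η) :
    Integrable fun t : ℝ => f t * Complex.exp (-(Complex.I * z * t)) := by
  refine hexp.mono' (by fun_prop) (Eventually.of_forall fun t => ?_)
  rw [norm_mul, mul_comm]
  gcongr
  exact (norm_cexp_neg_I_mul_le z t).trans (by gcongr)

lemma abs_mul_exp_mul_abs_le {r : ℝ} (hr : r < η) (t : ℝ) :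
    |t| * Real.exp (r * |t|) ≤ (η - r)⁻¹ * Real.exp (η * |t|) := by
  have hpos : 0 < η - r := sub_pos.2 hr
  calc |t| * Real.exp (r * |t|)
      ≤ ((η - r)⁻¹ * Real.exp ((η - r) * |t|)) * Real.exp (r * |t|) := by
        gcongr
        rw [inv_mul_eq_div, le_div_iff₀' hpos]
        linarith [Real.add_one_le_exp ((η - r) * |t|)]
    _ = (η - r)⁻¹ * Real.exp (η * |t|) := by
        rw [mul_assoc, ← Real.exp_add]
        ring_nf

lemma differentiableAt_fourierInversion (hf : AEStronglyMeasurable f)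
    (hexp : Integrable fun t => Real.exp (η * |t|) * ‖f t‖) (hz : |z.im| < η) :
    DifferentiableAt ℂ (fourierInversion f) z := by
  obtain ⟨r, hzr, hrη⟩ := exists_between hz
  have hstrip : {w : ℂ | |w.im| < r} ∈ 𝓝 z :=
    (isOpen_lt (by fun_prop) continuous_const).mem_nhds hzr
  have hderiv (t : ℝ) (w : ℂ) : HasDerivAt (fun w : ℂ => f t * Complex.exp (-(Complex.I * w * t)))
      (f t * (Complex.exp (-(Complex.I * w * t)) * -(Complex.I * t))) w := by
    simpa using ((((hasDerivAt_id w).const_mul Complex.I).mul_const (t : ℂ)).neg.cexp).const_mul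
      (f t)
  refine ((hasDerivAt_integral_of_dominated_loc_of_deriv_le hstrip
    (Eventually.of_forall fun w => by fun_prop) (integrable_mul_cexp_of_abs_im_le hf hexp hz.le)
    (by fun_prop) (Eventually.of_forall fun t w hw => ?_) (hexp.const_mul (η - r)⁻¹)
    (Eventually.of_forall fun t w _ => hderiv t w)).2.differentiableAt).const_mul _
  calc ‖f t * (Complex.exp (-(Complex.I * w * t)) * -(Complex.I * t))‖
      = ‖f t‖ * (|t| * ‖Complex.exp (-(Complex.I * w * t))‖) := by
        rw [norm_mul, norm_mul, norm_neg, norm_mul, Complex.norm_I, one_mul, Complex.norm_real,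
          Real.norm_eq_abs, mul_comm |t|]
    _ ≤ ‖f t‖ * (|t| * Real.exp (r * |t|)) := by
        gcongr
        exact (norm_cexp_neg_I_mul_le w t).trans (by gcongr; exact le_of_lt hw)
    _ ≤ ‖f t‖ * ((η - r)⁻¹ * Real.exp (η * |t|)) :=
        mul_le_mul_of_nonneg_left (abs_mul_exp_mul_abs_le hrη t) (norm_nonneg _)
    _ = (η - r)⁻¹ * (Real.exp (η * |t|) * ‖f t‖) := by ring

lemma analyticOnNhd_fourierInversion (hf : AEStronglyMeasurable f)
    (hexp : Integrable fun t => Real.exp (η * |t|) * ‖f t‖) :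
    AnalyticOnNhd ℂ (fourierInversion f) {z | |z.im| < η} :=
  DifferentiableOn.analyticOnNhd
    (fun _ hz => (differentiableAt_fourierInversion hf hexp hz).differentiableWithinAt)
    (isOpen_lt (by fun_prop) continuous_const)

end Strip

theorem exists_continuous_density_of_integrable_charFun {μ : Measure ℝ} [IsFiniteMeasure μ]
    (hint : Integrable (charFun μ)) :
    ∃ p : ℝ → ℝ, Continuous p ∧ (∃ M : ℝ, ∀ x, |p x| ≤ M) ∧
      (∀ x : ℝ, (p x : ℂ) = fourierInversion (charFun μ) x) ∧
      μ = volume.withDensity fun x => ENNReal.ofReal (p x) := by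
  refine ⟨fun x => (fourierInversion (charFun μ) x).re,
    Complex.continuous_re.comp (continuous_fourierInversion_ofReal hint), ⟨_, fun x =>
      (Complex.abs_re_le_norm _).trans (norm_fourierInversion_ofReal_le _ x)⟩,
    ofReal_re_fourierInversion charFun_neg, ?_⟩
  simpa only [fourierInversion_ofReal] using eq_withDensity_fourier_charFun hint

/-! ### The Quicksort fixed point -/

/-- The toll `1 + 2 x log x + 2 (1 - x) log (1 - x)` of the limiting Quicksort recursion, which is
the limit of the centred and rescaled number of comparisons made in the first partitioning round
when the pivot has relative rank `x`. -/
noncomputable def quicksortToll (x : ℝ) : ℝ := 1 - 2 * Real.binEntropy x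

section QuicksortToll
variable {x : ℝ}

lemma hasDerivAt_quicksortToll (hx : x ∈ Ioo (0 : ℝ) 1) :
    HasDerivAt quicksortToll (2 * (Real.log x - Real.log (1 - x))) x := by
  refine (((Real.hasDerivAt_binEntropy hx.1.ne' hx.2.ne).const_mul 2).const_sub 1).congr_deriv ?_
  ring

lemma hasDerivAt_deriv_quicksortToll (hx : x ∈ Ioo (0 : ℝ) 1) :
    HasDerivAt (fun y => 2 * (Real.log y - Real.log (1 - y))) (2 * (x⁻¹ + (1 - x)⁻¹)) x := by
  have h1 : 1 - x ≠ 0 := (sub_pos.2 hx.2).ne'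
  refine (((Real.hasDerivAt_log hx.1.ne').sub
    (((hasDerivAt_id x).const_sub 1).log h1)).const_mul 2).congr_deriv ?_
  simp [div_eq_mul_inv]

lemma eight_le_deriv2_quicksortToll (hx : x ∈ Ioo (0 : ℝ) 1) : 8 ≤ 2 * (x⁻¹ + (1 - x)⁻¹) := by
  have h0 : 0 < x := hx.1
  have h1 : 0 < 1 - x := sub_pos.2 hx.2
  have : 2 * (x⁻¹ + (1 - x)⁻¹) = 2 / (x * (1 - x)) := by field_simp; ring
  rw [this, le_div_iff₀ (by positivity)]
  nlinarith [sq_nonneg (2 * x - 1)]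

end QuicksortToll

lemma isSplittingFixedPoint_quicksortToll {f : ℝ → ℂ}
    (hfix : ∀ t : ℝ, f t = Complex.exp (Complex.I * t) *
      ∫ x in (0:ℝ)..1, f (t * x) * f (t * (1 - x)) *
        Complex.exp (2 * Complex.I * t * x * Real.log x +
          2 * Complex.I * t * (1 - x) * Real.log (1 - x))) :
    IsSplittingFixedPoint quicksortToll f := fun t => by
  rw [hfix t, ← intervalIntegral.integral_const_mul]
  congr 1 with x
  rw [mul_left_comm, ← Complex.exp_add, quicksortToll, Real.binEntropy, Real.log_inv, Real.log_inv]
  push_cast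
  ring_nf

theorem quicksort_density_analytic_extension_general
    (μ : Measure ℝ) [IsProbabilityMeasure μ] (f : ℝ → ℂ)
    (hf : ∀ t : ℝ, f t = ∫ x : ℝ, Complex.exp (Complex.I * t * x) ∂μ)
    {g g' g'' : ℝ → ℝ} (hg : ∀ x ∈ Ioo (0 : ℝ) 1, HasDerivAt g (g' x) x)
    (hg' : ∀ x ∈ Ioo (0 : ℝ) 1, HasDerivAt g' (g'' x) x)
    {lam : ℝ} (hlam : 0 < lam) (hg'' : ∀ x ∈ Ioo (0 : ℝ) 1, lam ≤ g'' x)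
    (hfix : IsSplittingFixedPoint g f) :
    ∃ η > (0:ℝ), ∃ p : ℝ → ℝ,
      Continuous p ∧
      (∃ M : ℝ, ∀ x : ℝ, |p x| ≤ M) ∧
      (∀ x : ℝ, (p x : ℂ) =
        (1 / (2 * (Real.pi : ℂ))) * ∫ t : ℝ, f t * Complex.exp (-(Complex.I * x * t))) ∧
      μ = volume.withDensity (fun x => ENNReal.ofReal (p x)) ∧
      (∀ s : ℂ, |s.im| < η →
        Integrable (fun t : ℝ => f t * Complex.exp (-(Complex.I * s * t)))) ∧
      ∃ P : ℂ → ℂ,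
        AnalyticOnNhd ℂ P {s : ℂ | |s.im| < η} ∧
        (∀ s : ℂ, |s.im| < η →
          P s = (1 / (2 * (Real.pi : ℂ))) * ∫ t : ℝ, f t * Complex.exp (-(Complex.I * s * t))) ∧
        (∀ x : ℝ, P (x : ℂ) = (p x : ℂ)) := by
  obtain rfl : f = charFun μ := funext fun t => by
    rw [hf, charFun_apply_real]
    exact integral_congr_ae (Eventually.of_forall fun x => by ring_nf)
  have hint := hfix.integrable_charFun fun _ =>
    hfix.norm_charFun_le_mul_rpow_neg_half hg hg' hlam hg''
  obtain ⟨η, hη, hexp⟩ := hfix.exists_pos_integrable_exp_mul_abs hint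
  obtain ⟨p, hcont, hbdd, hpf, hμ⟩ := exists_continuous_density_of_integrable_charFun hint
  have hmeas := hint.aestronglyMeasurable
  exact ⟨η, hη, p, hcont, hbdd, hpf, hμ,
    fun s hs => integrable_mul_cexp_of_abs_im_le hmeas hexp hs.le,
    fourierInversion (charFun μ), analyticOnNhd_fourierInversion hmeas hexp, fun _ _ => rfl,
    fun x => (hpf x).symm⟩

theorem quicksort_density_analytic_extension
    (μ : MeasureTheory.Measure ℝ) [MeasureTheory.IsProbabilityMeasure μ]
    (hmom : MeasureTheory.Integrable (fun x : ℝ => |x|) μ)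
    (f : ℝ → ℂ)
    (hf : ∀ t : ℝ, f t = ∫ x : ℝ, Complex.exp (Complex.I * t * x) ∂μ)
    (hfix : ∀ t : ℝ, f t = Complex.exp (Complex.I * t) *
      ∫ x in (0:ℝ)..1, f (t * x) * f (t * (1 - x)) *
        Complex.exp (2 * Complex.I * t * x * Real.log x +
          2 * Complex.I * t * (1 - x) * Real.log (1 - x))) :
    ∃ η > (0:ℝ), ∃ p : ℝ → ℝ,
      Continuous p ∧
      (∃ M : ℝ, ∀ x : ℝ, |p x| ≤ M) ∧
      (∀ x : ℝ, (p x : ℂ) =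
        (1 / (2 * (Real.pi : ℂ))) * ∫ t : ℝ, f t * Complex.exp (-(Complex.I * x * t))) ∧
      μ = MeasureTheory.volume.withDensity (fun x => ENNReal.ofReal (p x)) ∧
      (∀ s : ℂ, |s.im| < η →
        MeasureTheory.Integrable (fun t : ℝ => f t * Complex.exp (-(Complex.I * s * t)))) ∧
      ∃ P : ℂ → ℂ,
        AnalyticOnNhd ℂ P {s : ℂ | |s.im| < η} ∧
        (∀ s : ℂ, |s.im| < η →
          P s = (1 / (2 * (Real.pi : ℂ))) * ∫ t : ℝ, f t * Complex.exp (-(Complex.I * s * t))) ∧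
        (∀ x : ℝ, P (x : ℂ) = (p x : ℂ)) := by
  exact quicksort_density_analytic_extension_general μ f hf
    (fun _ => hasDerivAt_quicksortToll) (fun _ => hasDerivAt_deriv_quicksortToll) (by norm_num)
    (fun _ => eight_le_deriv2_quicksortToll) (isSplittingFixedPoint_quicksortToll hfix)
end

section
/- For every t > 0 and every σ > 0, the Laplace inversion formula holds: f(t) e^{2it log t} = (1/(2πi·t)) ∫_{σ−i∞}^{σ+i∞} ψ(s−i)² e^{ts} ds, where the integral is taken over the vertical line Re s = σ. -/
/-!
Let `g t = f t * e^{2it log t}`. Substituting `u = tx` turns the Quicksort equation into the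
convolution equation `∫₀ᵗ g(u) g(t - u) du = t e^{-it} g(t)`, whose left-hand side has Laplace
transform `ψ²`. As `e^{-σt} g(t)` on `(0, ∞)` lies in `L¹ ∩ L²`, Plancherel's theorem puts `ψ` in
`L²` of the line `Re s = σ`, so `ψ²` is integrable there and Fourier inversion recovers
`t e^{-it} g(t)`. Moving the variable of integration by `i` absorbs the factor `e^{-it}`.
-/

open MeasureTheory Set Complex
open scoped ENNReal FourierTransform Real

section Plancherel

variable {V F : Type*} [NormedAddCommGroup V] [InnerProductSpace ℝ V] [FiniteDimensional ℝ V]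
  [MeasurableSpace V] [BorelSpace V]

theorem continuous_fourier_of_integrable [NormedAddCommGroup F] [NormedSpace ℂ F] {h : V → F}
    (hh : Integrable h) : Continuous (𝓕 h) :=
  VectorFourier.fourierIntegral_continuous Real.continuous_fourierChar (innerSL ℝ).continuous₂ hh

variable [NormedAddCommGroup F] [InnerProductSpace ℂ F] [CompleteSpace F]

theorem fourier_toLp_two_ae_eq {h : V → F} (hh : Integrable h) (hh₂ : MemLp h 2) :
    (𝓕 (hh₂.toLp h) : Lp (α := V) F 2) =ᵐ[volume] 𝓕 h := by
  -- The `L²` transform is defined by extension from Schwartz functions, so it is compared with the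
  -- integral `𝓕 h` through its pairing with test functions, where both move `𝓕` onto `φ`.
  refine ae_eq_of_integral_contDiff_smul_eq ((Lp.memLp _).locallyIntegrable one_le_two)
    (continuous_fourier_of_integrable hh).locallyIntegrable fun φ hφ hφc ↦ ?_
  let H : Lp (α := V) F 2 := hh₂.toLp h
  let Φ : SchwartzMap V ℂ := HasCompactSupport.toSchwartzMap (f := ofRealCLM ∘ φ)
    (hφc.comp_left rfl) (by fun_prop)
  calc ∫ x, φ x • 𝓕 H x
    _ = Lp.toTemperedDistribution (𝓕 H) Φ := by simp [Φ]
    _ = ∫ x, 𝓕 Φ x • H x := by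
      rw [← Lp.fourier_toTemperedDistribution_eq, TemperedDistribution.fourier_apply,
        Lp.toTemperedDistribution_apply]
    _ = ∫ x, 𝓕 (Φ : V → ℂ) x • h x := by
      refine integral_congr_ae ?_
      filter_upwards [hh₂.coeFn_toLp] with x hx
      rw [hx, SchwartzMap.fourier_coe]
    _ = ∫ x, Φ x • 𝓕 h x := by
      simpa using! VectorFourier.integral_fourierIntegral_smul_eq_flip (L := innerₗ V)
        Real.continuous_fourierChar continuous_inner Φ.integrable hh
    _ = ∫ x, φ x • 𝓕 h x := by simp [Φ]

theorem memLp_two_fourier {h : V → F} (hh : Integrable h) (hh₂ : MemLp h 2) :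
    MemLp (𝓕 h) 2 :=
  (memLp_congr_ae (fourier_toLp_two_ae_eq hh hh₂)).1 (Lp.memLp _)

end Plancherel

section Laplace

variable {E : Type*} [NormedAddCommGroup E] [NormedSpace ℂ E]

/-- The one-sided Laplace transform `s ↦ ∫₀^∞ e^{-st} g(t) dt`; it is `0` by convention where the
integral diverges. -/
noncomputable def laplaceTransform (g : ℝ → E) (s : ℂ) : E :=
  ∫ t in Ioi (0 : ℝ), cexp (-(s * t)) • g t

/-- Absolute convergence of the integral defining `laplaceTransform g s`. -/
def LaplaceConvergent (g : ℝ → E) (s : ℂ) : Prop :=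
  IntegrableOn (fun t : ℝ ↦ cexp (-(s * t)) • g t) (Ioi 0)

/-- The damped function `e^{-σt} g(t)`, cut off to `t > 0`; up to scaling, its Fourier transform is
`laplaceTransform g` on the line `Re s = σ`. -/
noncomputable def laplaceDamping (g : ℝ → E) (σ : ℝ) : ℝ → E :=
  (Ioi 0).indicator fun t : ℝ ↦ cexp (-(σ * t)) • g t

theorem norm_cexp_neg_mul_ofReal (s : ℂ) (t : ℝ) : ‖cexp (-(s * t))‖ = Real.exp (-(s.re * t)) := by
  simp [Complex.norm_exp]

theorem LaplaceConvergent.mono_re {g : ℝ → E} {s s' : ℂ} (hg : LaplaceConvergent g s)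
    (hs : s.re ≤ s'.re) : LaplaceConvergent g s' := by
  have hmeas : Measurable fun t : ℝ ↦ cexp (-((s' - s) * t)) := by fun_prop
  refine (hg.bdd_smul 1 hmeas.aestronglyMeasurable ?_).congr (ae_of_all _ fun t ↦ ?_)
  · filter_upwards [ae_restrict_mem measurableSet_Ioi] with t ht
    rw [norm_cexp_neg_mul_ofReal, Real.exp_le_one_iff, neg_nonpos, sub_re]
    exact mul_nonneg (sub_nonneg.2 hs) (le_of_lt ht)
  · simp only [Pi.smul_apply', smul_smul, ← Complex.exp_add]
    ring_nf

theorem integrable_laplaceDamping_iff {g : ℝ → E} {σ : ℝ} :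
    Integrable (laplaceDamping g σ) ↔ LaplaceConvergent g σ :=
  integrable_indicator_iff measurableSet_Ioi

theorem laplaceTransform_vertical_eq_fourier (g : ℝ → E) (σ y : ℝ) :
    laplaceTransform g (σ + y * I) = 𝓕 (laplaceDamping g σ) (y / (2 * π)) := by
  rw [laplaceTransform, Real.fourier_real_eq_integral_exp_smul,
    ← integral_indicator measurableSet_Ioi]
  congr 1 with t
  by_cases ht : t ∈ Ioi (0 : ℝ)
  · simp only [laplaceDamping, indicator_of_mem ht, smul_smul, ← Complex.exp_add]
    congr 2
    push_cast
    field_simp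
    ring
  · simp [laplaceDamping, indicator_of_notMem ht]

theorem cexp_smul_fourierInv_fourier_laplaceDamping (g : ℝ → E) (σ t : ℝ) :
    cexp (t * σ) • 𝓕⁻ (𝓕 (laplaceDamping g σ)) t =
      (1 / (2 * π) : ℂ) • ∫ y : ℝ, cexp (t * (σ + y * I)) • laplaceTransform g (σ + y * I) := by
  have hscale := Measure.integral_comp_mul_left
    (fun y : ℝ ↦ cexp (t * (σ + y * I)) • laplaceTransform g (σ + y * I)) (2 * π)
  rw [abs_of_pos (by positivity), ← Complex.coe_smul] at hscale
  rw [Real.fourierInv_eq', ← integral_smul]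
  convert hscale using 1
  · congr 1 with w
    rw [laplaceTransform_vertical_eq_fourier, mul_div_cancel_left₀ _ (by positivity), smul_smul,
      ← Complex.exp_add]
    congr 2
    simp only [RCLike.inner_apply, Real.ringHom_apply, ofReal_mul, ofReal_ofNat]
    ring
  · simp

theorem laplaceTransform_inversion [CompleteSpace E] {g : ℝ → E} {σ t : ℝ}
    (hg : LaplaceConvergent g σ) (hL : VerticalIntegrable (laplaceTransform g) σ) (ht : 0 < t)
    (hgt : ContinuousAt g t) :
    (1 / (2 * π) : ℂ) • ∫ y : ℝ, cexp (t * (σ + y * I)) • laplaceTransform g (σ + y * I) = g t := by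
  have hF : Integrable (𝓕 (laplaceDamping g σ)) := by
    refine (Integrable.comp_mul_left' hL Real.two_pi_pos.ne').congr (ae_of_all _ fun w ↦ ?_)
    simp only [laplaceTransform_vertical_eq_fourier]
    rw [mul_div_cancel_left₀ _ Real.two_pi_pos.ne']
  have hht : ContinuousAt (laplaceDamping g σ) t := by
    have : ContinuousAt (fun t : ℝ ↦ cexp (-(σ * t)) • g t) t := by fun_prop
    exact this.congr (eqOn_indicator.symm.eventuallyEq_of_mem (Ioi_mem_nhds ht))
  rw [← cexp_smul_fourierInv_fourier_laplaceDamping,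
    (integrable_laplaceDamping_iff.2 hg).fourierInv_fourier_eq hF hht, laplaceDamping,
    indicator_of_mem (mem_Ioi.2 ht), smul_smul, ← Complex.exp_add, mul_comm, add_neg_cancel,
    Complex.exp_zero, one_smul]

section Convolution

variable {A : Type*} [NormedRing A] [NormedAlgebra ℂ A] {g k : ℝ → A} {s : ℂ}

theorem cexp_smul_intervalIntegral_convolution (g k : ℝ → A) (s : ℂ) (t : ℝ) :
    cexp (-(s * t)) • ∫ u in (0 : ℝ)..t, g u * k (t - u) =
      ∫ u in (0 : ℝ)..t, (cexp (-(s * u)) • g u) * (cexp (-(s * (t - u : ℝ))) • k (t - u)) := by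
  rw [← intervalIntegral.integral_smul]
  congr 1 with u
  rw [smul_mul_smul_comm, ← Complex.exp_add]
  congr 2
  push_cast
  ring

theorem LaplaceConvergent.convolution (hg : LaplaceConvergent g s) (hk : LaplaceConvergent k s) :
    LaplaceConvergent (fun t ↦ ∫ u in (0 : ℝ)..t, g u * k (t - u)) s := by
  simp only [LaplaceConvergent, cexp_smul_intervalIntegral_convolution]
  exact (integrable_indicator_iff measurableSet_Ioi).1
    (integrable_posConvolution hg hk (ContinuousLinearMap.mul ℝ A))

theorem laplaceTransform_convolution [CompleteSpace A] (hg : LaplaceConvergent g s)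
    (hk : LaplaceConvergent k s) :
    laplaceTransform (fun t ↦ ∫ u in (0 : ℝ)..t, g u * k (t - u)) s =
      laplaceTransform g s * laplaceTransform k s := by
  simp only [laplaceTransform, cexp_smul_intervalIntegral_convolution]
  exact integral_posConvolution hg hk (ContinuousLinearMap.mul ℝ A)

end Convolution

section Product

variable {g k : ℝ → ℂ} {σ : ℝ}

theorem verticalIntegrable_laplaceTransform_mul
    (hg : LaplaceConvergent g σ) (hg₂ : MemLp (laplaceDamping g σ) 2)
    (hk : LaplaceConvergent k σ) (hk₂ : MemLp (laplaceDamping k σ) 2) :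
    VerticalIntegrable (fun s ↦ laplaceTransform g s * laplaceTransform k s) σ := by
  have hgk := (memLp_two_fourier (integrable_laplaceDamping_iff.2 hg) hg₂).integrable_mul
    (memLp_two_fourier (integrable_laplaceDamping_iff.2 hk) hk₂)
  simp only [VerticalIntegrable, laplaceTransform_vertical_eq_fourier]
  exact hgk.comp_div Real.two_pi_pos.ne'

theorem laplaceTransform_mul_inversion
    (hg : LaplaceConvergent g σ) (hg₂ : MemLp (laplaceDamping g σ) 2)
    (hk : LaplaceConvergent k σ) (hk₂ : MemLp (laplaceDamping k σ) 2) {t : ℝ} (ht : 0 < t)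
    (hcont : ContinuousAt (fun t ↦ ∫ u in (0 : ℝ)..t, g u * k (t - u)) t) :
    1 / (2 * π) * ∫ y : ℝ, cexp (t * (σ + y * I)) *
      (laplaceTransform g (σ + y * I) * laplaceTransform k (σ + y * I)) =
      ∫ u in (0 : ℝ)..t, g u * k (t - u) := by
  have hre (y : ℝ) : (σ : ℂ).re = (σ + y * I).re := by simp
  have hconv (y : ℝ) := laplaceTransform_convolution (hg.mono_re (hre y).le) (hk.mono_re (hre y).le)
  rw [← laplaceTransform_inversion (hg.convolution hk) _ ht hcont]
  · simp only [hconv, smul_eq_mul]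
  · simpa only [VerticalIntegrable, hconv] using
      verticalIntegrable_laplaceTransform_mul hg hg₂ hk hk₂

end Product

theorem memLp_exp_neg_mul_Ioi {b : ℝ} (hb : 0 < b) (p : ℝ≥0∞) :
    MemLp (fun t : ℝ ↦ Real.exp (-(b * t))) p (volume.restrict (Ioi 0)) := by
  have hmeas : Measurable fun t : ℝ ↦ Real.exp (-(b * t)) := by fun_prop
  rcases eq_or_ne p 0 with rfl | hp₀
  · exact memLp_zero_iff_aestronglyMeasurable.2 hmeas.aestronglyMeasurable
  rcases eq_or_ne p ∞ with rfl | hp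
  · refine memLp_top_of_bound hmeas.aestronglyMeasurable 1 ?_
    filter_upwards [ae_restrict_mem measurableSet_Ioi] with t ht
    rw [Real.norm_eq_abs, Real.abs_exp, Real.exp_le_one_iff, neg_nonpos]
    exact (mul_pos hb ht).le
  · rw [← integrable_norm_rpow_iff hmeas.aestronglyMeasurable hp₀ hp]
    have hpb : 0 < p.toReal * b := mul_pos (ENNReal.toReal_pos hp₀ hp) hb
    refine (integrableOn_exp_mul_Ioi (neg_neg_of_pos hpb) 0).congr (ae_of_all _ fun t ↦ ?_)
    simp only [Real.norm_eq_abs, Real.abs_exp, ← Real.exp_mul]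
    ring_nf

theorem memLp_laplaceDamping {g : ℝ → E} {C a σ : ℝ}
    (hg : AEStronglyMeasurable g (volume.restrict (Ioi 0)))
    (hbound : ∀ t, 0 < t → ‖g t‖ ≤ C * Real.exp (a * t)) (hσ : a < σ) (p : ℝ≥0∞) :
    MemLp (laplaceDamping g σ) p := by
  refine (memLp_indicator_iff_restrict measurableSet_Ioi).2
    ((memLp_exp_neg_mul_Ioi (sub_pos.2 hσ) p).of_le_mul (c := C) ?_ ?_)
  · exact AEStronglyMeasurable.smul (by fun_prop) hg
  · filter_upwards [ae_restrict_mem measurableSet_Ioi] with t ht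
    calc ‖cexp (-(σ * t)) • g t‖
      _ ≤ Real.exp (-(σ * t)) * (C * Real.exp (a * t)) := by
        rw [norm_smul, norm_cexp_neg_mul_ofReal, ofReal_re]
        gcongr
        exact hbound t ht
      _ = C * ‖Real.exp (-((σ - a) * t))‖ := by
        rw [Real.norm_eq_abs, Real.abs_exp, mul_left_comm, ← Real.exp_add]
        ring_nf

theorem integral_vertical_comp_sub_I (Φ : ℂ → ℂ) (σ t : ℝ) :
    ∫ y : ℝ, Φ (σ + I * y - I) * cexp (t * (σ + I * y)) * I =
      I * cexp (I * t) * ∫ y : ℝ, cexp (t * (σ + y * I)) * Φ (σ + y * I) := by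
  rw [← integral_const_mul, ← integral_add_right_eq_self _ (1 : ℝ)]
  congr 1 with y
  have hline : (σ + I * (y + 1 : ℝ) - I : ℂ) = σ + y * I := by push_cast; ring
  have hexp : cexp (t * (σ + I * (y + 1 : ℝ))) = cexp (I * t) * cexp (t * (σ + y * I)) := by
    rw [← Complex.exp_add]
    congr 1
    push_cast
    ring
  rw [hline, hexp]
  ring

end Laplace

section Quicksort

/-- The function `t ↦ f(t) e^{2it log t}` whose Laplace transform is `ψ`; the twist by
`e^{2it log t}` turns the Quicksort equation into a convolution equation. -/
noncomputable def logPhaseTwist (f : ℝ → ℂ) (t : ℝ) : ℂ :=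
  f t * cexp (2 * I * t * Real.log t)

/-- The fixed-point equation for the characteristic function of the limiting Quicksort
distribution, imposed on the positive half-line. -/
def QuicksortEquation (f : ℝ → ℂ) : Prop :=
  ∀ t : ℝ, 0 < t → f t = cexp (I * t) * ∫ x in (0 : ℝ)..1, f (t * x) * f (t * (1 - x)) *
    cexp (2 * I * t * x * Real.log x + 2 * I * t * (1 - x) * Real.log (1 - x))

variable {f : ℝ → ℂ} {t : ℝ}

theorem norm_logPhaseTwist (f : ℝ → ℂ) (t : ℝ) : ‖logPhaseTwist f t‖ = ‖f t‖ := by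
  simp [logPhaseTwist, norm_exp]

theorem continuousOn_logPhaseTwist (hf : ContinuousOn f (Ioi 0)) :
    ContinuousOn (logPhaseTwist f) (Ioi 0) := by
  have hlog : ContinuousOn Real.log (Ioi 0) :=
    Real.continuousOn_log.mono fun t ht ↦ (mem_Ioi.1 ht).ne'
  unfold logPhaseTwist
  fun_prop

theorem logPhaseTwist_mul_logPhaseTwist (f : ℝ → ℂ) (ht : 0 < t) {x : ℝ} (hx : x ∈ Ioo 0 1) :
    logPhaseTwist f (t * x) * logPhaseTwist f (t * (1 - x)) =
      cexp (2 * I * t * Real.log t) * (f (t * x) * f (t * (1 - x)) *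
        cexp (2 * I * t * x * Real.log x + 2 * I * t * (1 - x) * Real.log (1 - x))) := by
  simp only [logPhaseTwist]
  rw [Real.log_mul ht.ne' hx.1.ne', Real.log_mul ht.ne' (sub_pos.2 hx.2).ne', mul_mul_mul_comm,
    ← Complex.exp_add, mul_left_comm, ← Complex.exp_add]
  congr 2
  push_cast
  ring

theorem QuicksortEquation.convolution_logPhaseTwist (hf : QuicksortEquation f) (ht : 0 < t) :
    ∫ u in (0 : ℝ)..t, logPhaseTwist f u * logPhaseTwist f (t - u) =
      t * cexp (-(I * t)) * logPhaseTwist f t := by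
  calc ∫ u in (0 : ℝ)..t, logPhaseTwist f u * logPhaseTwist f (t - u)
    _ = t * ∫ x in (0 : ℝ)..1, logPhaseTwist f (t * x) * logPhaseTwist f (t * (1 - x)) := by
      simpa [mul_sub] using (intervalIntegral.smul_integral_comp_mul_left (a := 0) (b := 1)
        (fun u ↦ logPhaseTwist f u * logPhaseTwist f (t - u)) t).symm
    _ = t * (cexp (2 * I * t * Real.log t) * (cexp (-(I * t)) * f t)) := by
      rw [intervalIntegral.integral_congr_Ioo_of_le zero_le_one
        fun x hx ↦ logPhaseTwist_mul_logPhaseTwist f ht hx, intervalIntegral.integral_const_mul,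
        hf t ht, ← mul_assoc (cexp (-(I * t))), ← Complex.exp_add, neg_add_cancel,
        Complex.exp_zero, one_mul]
    _ = t * cexp (-(I * t)) * logPhaseTwist f t := by
      rw [logPhaseTwist]
      ring

theorem QuicksortEquation.continuousAt_convolution (hf : QuicksortEquation f)
    (hcont : ContinuousOn f (Ioi 0)) (ht : 0 < t) :
    ContinuousAt (fun t ↦ ∫ u in (0 : ℝ)..t, logPhaseTwist f u * logPhaseTwist f (t - u)) t := by
  have hg : ContinuousAt (logPhaseTwist f) t :=
    (continuousOn_logPhaseTwist hcont).continuousAt (Ioi_mem_nhds ht)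
  have hprod : ContinuousAt (fun t : ℝ ↦ t * cexp (-(I * t)) * logPhaseTwist f t) t := by fun_prop
  refine hprod.congr ?_
  filter_upwards [Ioi_mem_nhds ht] with r hr
  exact (hf.convolution_logPhaseTwist hr).symm

theorem QuicksortEquation.laplace_inversion {C a : ℝ} (hf : QuicksortEquation f)
    (hcont : ContinuousOn f (Ioi 0)) (hbound : ∀ t, 0 < t → ‖f t‖ ≤ C * Real.exp (a * t))
    (ht : 0 < t) {σ : ℝ} (hσ : a < σ) :
    1 / (2 * π) * ∫ y : ℝ, cexp (t * (σ + y * I)) *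
      laplaceTransform (logPhaseTwist f) (σ + y * I) ^ 2 =
      t * cexp (-(I * t)) * logPhaseTwist f t := by
  have hmeas := (continuousOn_logPhaseTwist hcont).aestronglyMeasurable (μ := volume)
    measurableSet_Ioi
  have hdamp : ∀ p, MemLp (laplaceDamping (logPhaseTwist f) σ) p :=
    memLp_laplaceDamping hmeas (by simpa only [norm_logPhaseTwist] using hbound) hσ
  have hconv : LaplaceConvergent (logPhaseTwist f) σ :=
    integrable_laplaceDamping_iff.1 (memLp_one_iff_integrable.1 (hdamp 1))
  simp only [sq]
  rw [← hf.convolution_logPhaseTwist ht]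
  exact laplaceTransform_mul_inversion hconv (hdamp 2) hconv (hdamp 2) ht
    (hf.continuousAt_convolution hcont ht)

theorem laplace_inversion_formula_general {C a : ℝ} (hcont : ContinuousOn f (Ioi 0))
    (hbound : ∀ t, 0 < t → ‖f t‖ ≤ C * Real.exp (a * t)) (hfix : QuicksortEquation f) {ψ : ℂ → ℂ}
    (hψ : ∀ s, a < s.re → ψ s = laplaceTransform (logPhaseTwist f) s) (ht : 0 < t) {σ : ℝ}
    (hσ : a < σ) :
    f t * cexp (2 * I * t * Real.log t) =
      (1 / (2 * π * I * t)) *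
        ∫ y : ℝ, ψ (σ + I * y - I) ^ 2 * cexp (t * (σ + I * y)) * I := by
  have hline (y : ℝ) : ψ (σ + y * I) = laplaceTransform (logPhaseTwist f) (σ + y * I) :=
    hψ _ (by simpa using hσ)
  have hinv := hfix.laplace_inversion hcont hbound ht hσ
  have ht₀ : (t : ℂ) ≠ 0 := ofReal_ne_zero.2 ht.ne'
  rw [integral_vertical_comp_sub_I (ψ · ^ 2)]
  simp only [hline]
  calc logPhaseTwist f t
    _ = cexp (I * t) / t * (t * cexp (-(I * t)) * logPhaseTwist f t) := by
      rw [Complex.exp_neg]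
      field_simp
    _ = _ := by
      rw [← hinv]
      field_simp

end Quicksort

theorem laplace_inversion_formula
    (μ : MeasureTheory.Measure ℝ) [MeasureTheory.IsProbabilityMeasure μ]
    (hmom : MeasureTheory.Integrable (fun x : ℝ => |x|) μ)
    (f : ℝ → ℂ)
    (hf : ∀ t : ℝ, f t = ∫ x : ℝ, Complex.exp (Complex.I * t * x) ∂μ)
    (hfix : ∀ t : ℝ, f t = Complex.exp (Complex.I * t) *
      ∫ x in (0:ℝ)..1, f (t * x) * f (t * (1 - x)) *
        Complex.exp (2 * Complex.I * t * x * Real.log x +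
          2 * Complex.I * t * (1 - x) * Real.log (1 - x)))
    (ψ : ℂ → ℂ) (hent : Differentiable ℂ ψ)
    (hψ : ∀ s : ℂ, 0 < s.re → ψ s = ∫ t in Set.Ioi (0:ℝ),
      f t * Complex.exp (2 * Complex.I * t * Real.log t) * Complex.exp (-(s * t))) :
    ∀ t : ℝ, 0 < t → ∀ σ : ℝ, 0 < σ →
      f t * Complex.exp (2 * Complex.I * t * Real.log t) =
        (1 / (2 * (Real.pi : ℂ) * Complex.I * t)) *
          ∫ y : ℝ, (ψ ((σ : ℂ) + Complex.I * y - Complex.I)) ^ 2 *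
            Complex.exp ((t : ℂ) * ((σ : ℂ) + Complex.I * y)) * Complex.I := by
  intro t ht σ hσ
  have hchar : f = charFun μ := by
    ext t
    simp only [hf, charFun_apply_real, mul_rotate I]
  refine laplace_inversion_formula_general (C := 1) (a := 0) ?_ ?_ (fun t _ ↦ hfix t) ?_ ht hσ
  · exact hchar ▸ continuous_charFun.continuousOn
  · simpa [hchar] using fun t _ ↦ norm_charFun_le_one t
  · intro s hs
    simp only [hψ s hs, laplaceTransform, logPhaseTwist, smul_eq_mul, mul_comm]
end
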